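/- arXiv:2007.07639 — 3 statements merged into one kernel-verified Lean document; each statement's English description precedes it below -/
import Mathlib

section
/- Suppose G is connected. If there exists a nonzero real vector b with W b = -b (i.e., -1 is an eigenvalue of W), then G is bipartite. Combined with the converse, for a connected graph: -1 is an eigenvalue of W if and only if G is bipartite. -/
/-- For a connected graph, `-1` is an eigenvalue of the random-walk transition matrix `W`
(i.e. there is a nonzero `b` with `W b = -b`) if and only if the graph is bipartite. -/
theorem minus_one_eigenvalue_iff_bipartite
    (n : ℕ) (hn : 1 ≤ n) (A : Matrix (Fin n) (Fin n) ℝ)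
    (hsymm : ∀ i j, A i j = A j i)
    (h01 : ∀ i j, A i j = 0 ∨ A i j = 1)
    (hdiag : ∀ i, A i i = 0)
    (hdeg : ∀ i, 0 < ∑ j, A i j)
    (hconn : (SimpleGraph.fromRel (fun i j => A i j = 1)).Connected)
    (W : Matrix (Fin n) (Fin n) ℝ)
    (hW : ∀ i j, W i j = A i j / ∑ k, A i k) :
    (∃ b : Fin n → ℝ, b ≠ 0 ∧ W.mulVec b = -b)
      ↔ ∃ S : Set (Fin n), ∀ i j, A i j = 1 → (i ∈ S ↔ j ∉ S) := by
  classical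
  have key : ∀ b : Fin n → ℝ, W.mulVec b = -b ↔
      ∀ i, ∑ j, A i j * b j = -((∑ j, A i j) * b i) := by
    intro b
    rw [funext_iff]
    refine forall_congr' fun i => ?_
    have h1 : W.mulVec b i = (∑ j, A i j * b j) / ∑ k, A i k := by
      simp only [Matrix.mulVec, dotProduct, hW, Finset.sum_div]
      refine Finset.sum_congr rfl fun j _ => ?_
      ring
    rw [h1, Pi.neg_apply, div_eq_iff (hdeg i).ne']
    constructor
    · intro h
      rw [h]
      ring
    · intro h
      rw [h]
      ring
  constructor
  · rintro ⟨b, hb, hWb⟩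
    have hk := (key b).1 hWb
    have hz : ∑ i, ∑ j, A i j * (b i + b j) ^ 2 = 0 := by
      have e1 : ∑ i, ∑ j, A i j * (b i + b j) ^ 2
          = (∑ i, ∑ j, A i j * b i ^ 2) + (∑ i, ∑ j, 2 * b i * (A i j * b j))
            + ∑ i, ∑ j, A i j * b j ^ 2 := by
        simp only [← Finset.sum_add_distrib]
        refine Finset.sum_congr rfl fun i _ => Finset.sum_congr rfl fun j _ => ?_
        ring
      have e2 : ∑ i, ∑ j, A i j * b j ^ 2 = ∑ i, ∑ j, A i j * b i ^ 2 := by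
        rw [Finset.sum_comm]
        refine Finset.sum_congr rfl fun i _ => Finset.sum_congr rfl fun j _ => ?_
        rw [hsymm]
      rw [e1, e2, ← Finset.sum_add_distrib, ← Finset.sum_add_distrib]
      refine Finset.sum_eq_zero fun i _ => ?_
      rw [← Finset.mul_sum, hk, ← Finset.sum_mul]
      ring
    have hnn : ∀ i j, 0 ≤ A i j * (b i + b j) ^ 2 := by
      intro i j
      rcases h01 i j with h | h <;> rw [h] <;> positivity
    have hedge : ∀ i j, A i j = 1 → b i = - b j := by
      intro i j hij
      have h1 := (Finset.sum_eq_zero_iff_of_nonneg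
        (fun i _ => Finset.sum_nonneg fun j _ => hnn i j)).1 hz i (Finset.mem_univ i)
      have h2 := (Finset.sum_eq_zero_iff_of_nonneg (fun j _ => hnn i j)).1 h1 j
        (Finset.mem_univ j)
      rw [hij, one_mul] at h2
      have h3 : b i + b j = 0 := by simpa using h2
      linarith
    have hwalk : ∀ i j, b i ≠ 0 → b j ≠ 0 := by
      intro i j
      obtain ⟨p⟩ := hconn.preconnected i j
      induction p with
      | nil => exact id
      | cons h p ih =>
        intro hi
        apply ih
        rw [SimpleGraph.fromRel_adj] at h
        rcases h.2 with h | h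
        · have := hedge _ _ h
          intro h0
          exact hi (by rw [this, h0, neg_zero])
        · have := hedge _ _ h
          rw [this]
          exact neg_ne_zero.2 hi
    obtain ⟨i₀, hi₀⟩ := Function.ne_iff.1 hb
    refine ⟨{i | 0 < b i}, fun i j hij => ?_⟩
    have h1 := hedge i j hij
    have h2 := hwalk i₀ j hi₀
    simp only [Set.mem_setOf_eq, not_lt]
    constructor
    · intro h
      linarith
    · intro h
      have := lt_of_le_of_ne h h2
      linarith
  · rintro ⟨S, hS⟩
    refine ⟨fun i => if i ∈ S then 1 else -1, ?_, (key _).2 ?_⟩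
    · intro h
      have := congrFun h ⟨0, hn⟩
      by_cases h0 : (⟨0, hn⟩ : Fin n) ∈ S <;> simp [h0] at this
    · intro i
      rw [Finset.sum_mul, ← Finset.sum_neg_distrib]
      refine Finset.sum_congr rfl fun j _ => ?_
      rcases h01 i j with h | h
      · simp [h]
      · have := hS i j h
        by_cases hj : j ∈ S <;> simp_all
end

section
/- For 0 ≤ u ≤ 1, every complex eigenvalue μ of Q = I - (1-u)Wᵀ (i.e., every root of the characteristic polynomial of Q over ℂ) satisfies Re μ ≥ u. -/
open Matrix

/-- For `0 ≤ u ≤ 1`, every complex eigenvalue `μ` of `Q = I - (1-u) Wᵀ` (i.e. every root of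
the characteristic polynomial of `Q` over `ℂ`) satisfies `Re μ ≥ u`. -/
theorem pagerank_operator_eigenvalue_re_ge
    (n : ℕ) (hn : 1 ≤ n) (A : Matrix (Fin n) (Fin n) ℝ)
    (hsymm : ∀ i j, A i j = A j i)
    (h01 : ∀ i j, A i j = 0 ∨ A i j = 1)
    (hdiag : ∀ i, A i i = 0)
    (hdeg : ∀ i, 0 < ∑ j, A i j)
    (W : Matrix (Fin n) (Fin n) ℝ)
    (hW : ∀ i j, W i j = A i j / ∑ k, A i k)
    (u : ℝ) (hu0 : 0 ≤ u) (hu1 : u ≤ 1)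
    (Q : Matrix (Fin n) (Fin n) ℝ)
    (hQ : Q = 1 - (1 - u) • Wᵀ)
    (mu : ℂ)
    (hmu : (Matrix.charpoly (Q.map (Complex.ofReal ·))).IsRoot mu) :
    u ≤ mu.re := by
  have hev : Module.End.HasEigenvalue (Matrix.toLin' (Q.map (Complex.ofReal ·))ᵀ) mu := by
    rw [Module.End.hasEigenvalue_iff_isRoot_charpoly, Matrix.charpoly_toLin',
      Matrix.charpoly_transpose]
    exact hmu
  obtain ⟨k, hk⟩ := eigenvalue_mem_ball hev
  have hkk : (Q.map (Complex.ofReal ·))ᵀ k k = 1 := by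
    simp [hQ, hW, hdiag]
  have hA : ∀ i j, 0 ≤ A i j := fun i j => by
    rcases h01 i j with h | h <;> simp [h]
  have hW0 : ∀ i j, 0 ≤ W i j := fun i j => by
    rw [hW]; exact div_nonneg (hA i j) (hdeg i).le
  have hW1 : ∑ j, W k j = 1 := by
    simp only [hW]
    rw [← Finset.sum_div]
    exact div_self (hdeg k).ne'
  have hsum : ∑ j ∈ Finset.univ.erase k, ‖(Q.map (Complex.ofReal ·))ᵀ k j‖ ≤ 1 - u := by
    calc _ = ∑ j ∈ Finset.univ.erase k, (1 - u) * W k j := by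
          refine Finset.sum_congr rfl fun j hj => ?_
          have hjk : j ≠ k := Finset.ne_of_mem_erase hj
          have h1 : (Q.map (Complex.ofReal ·))ᵀ k j = ((-((1 - u) * W k j) : ℝ) : ℂ) := by
            simp [hQ, Matrix.one_apply_ne hjk]
          rw [h1, Complex.norm_real, norm_neg, Real.norm_of_nonneg]
          exact mul_nonneg (by linarith) (hW0 k j)
      _ ≤ ∑ j, (1 - u) * W k j :=
          Finset.sum_le_sum_of_subset_of_nonneg (Finset.erase_subset _ _)
            fun j _ _ => mul_nonneg (by linarith) (hW0 k j)
      _ = 1 - u := by rw [← Finset.mul_sum, hW1, mul_one]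
  rw [hkk, Metric.mem_closedBall, dist_eq_norm] at hk
  have h2 := (Complex.abs_re_le_norm (mu - 1)).trans (hk.trans hsum)
  have h3 := (abs_le.mp h2).1
  simp at h3
  linarith
end

section
/- For 0 < u < 1, let λ_1, …, λ_n be the roots (with multiplicity, over ℂ) of the characteristic polynomial of W; then trace(Q⁻¹) = Σ_{k=1}^n 1/(1 - (1-u)λ_k). Consequently, since λ = 1 is an eigenvalue of W (contributing the term 1/u), the average transit time of the Page Rank walk equals ⟨T⟩ = trace(Q⁻¹) - 1/u = Σ over the remaining eigenvalues λ_k ≠ those accounting for the term 1/u of 1/(1 - (1-u)λ_k); formally: trace(Q⁻¹) - 1/u = (Σ_{λ ∈ roots of charpoly(W) over ℂ} 1/(1-(1-u)λ)) - 1/u. -/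
open Matrix

open Polynomial in
lemma trace_inv_aux {n : ℕ} (M : Matrix (Fin n) (Fin n) ℂ) (x : ℂ)
    (h : (Matrix.scalar (Fin n) x - M).det ≠ 0) :
    (Matrix.scalar (Fin n) x - M)⁻¹.trace = (M.charpoly.roots.map fun z => 1 / (x - z)).sum := by
  have hp : M.charpoly.eval x ≠ 0 := by rwa [Matrix.eval_charpoly]
  rw [← (IsAlgClosed.splits M.charpoly).eval_derivative_div_eval_of_ne_zero hp,
    Matrix.eval_charpoly, eq_div_iff h]
  set N := Matrix.scalar (Fin n) x - M with hN
  have h1 : M.charpoly.comp (X + C x) = C N.det * det (1 + (X : ℂ[X]) • N⁻¹.map C) := by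
    rw [← Matrix.charpoly_sub_scalar]
    have e : (M - Matrix.scalar (Fin n) x) = -N := by rw [hN]; abel
    have hu : IsUnit N.det := isUnit_iff_ne_zero.mpr h
    have e2 : N.map C * N⁻¹.map C = (1 : Matrix (Fin n) (Fin n) ℂ[X]) := by
      rw [← Matrix.map_mul, Matrix.mul_nonsing_inv _ hu]; simp
    have e3 : C N.det = (N.map C).det := by
      rw [RingHom.map_det]; rfl
    rw [e, e3, ← Matrix.det_mul, Matrix.mul_add, Matrix.mul_smul, e2, Matrix.charpoly]
    congr 1
    ext i j : 1
    by_cases hij : i = j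
    · subst hij; simp [add_comm]
    · simp [hij]
  have h2 := congrArg (fun q => (derivative q).eval 0) h1
  simp only [derivative_comp, derivative_C_mul, eval_mul, eval_C,
    Matrix.derivative_det_one_add_X_smul] at h2
  simp at h2
  rw [h2, mul_comm]

/-- For `0 < u < 1`, with `λ₁, …, λₙ` the complex roots (with multiplicity) of the
characteristic polynomial of `W`, `trace(Q⁻¹) = ∑ₖ 1/(1 - (1-u) λₖ)`; consequently the
average transit time `⟨T⟩ = trace(Q⁻¹) - 1/u` equals the same sum minus the term `1/u`
contributed by the eigenvalue `λ = 1` of `W`. -/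
theorem pagerank_trace_inverse_eigenvalue_sum
    (n : ℕ) (hn : 1 ≤ n) (A : Matrix (Fin n) (Fin n) ℝ)
    (hsymm : ∀ i j, A i j = A j i)
    (h01 : ∀ i j, A i j = 0 ∨ A i j = 1)
    (hdiag : ∀ i, A i i = 0)
    (hdeg : ∀ i, 0 < ∑ j, A i j)
    (W : Matrix (Fin n) (Fin n) ℝ)
    (hW : ∀ i j, W i j = A i j / ∑ k, A i k)
    (u : ℝ) (hu0 : 0 < u) (hu1 : u < 1)
    (Q : Matrix (Fin n) (Fin n) ℝ)
    (hQ : Q = 1 - (1 - u) • Wᵀ)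
    (hQunit : IsUnit Q) :
    ((Q⁻¹.trace : ℝ) : ℂ)
      = ((Matrix.charpoly (W.map (Complex.ofReal ·))).roots.map
          (fun lam => 1 / (1 - ((1 : ℂ) - (u : ℂ)) * lam))).sum
    ∧ ((Q⁻¹.trace : ℝ) : ℂ) - 1 / (u : ℂ)
      = ((Matrix.charpoly (W.map (Complex.ofReal ·))).roots.map
          (fun lam => 1 / (1 - ((1 : ℂ) - (u : ℂ)) * lam))).sum - 1 / (u : ℂ) := by
  suffices H : ((Q⁻¹.trace : ℝ) : ℂ)
      = ((Matrix.charpoly (W.map (Complex.ofReal ·))).roots.map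
          (fun lam => 1 / (1 - ((1 : ℂ) - (u : ℂ)) * lam))).sum from ⟨H, by rw [H]⟩
  set M := W.map (Complex.ofReal ·) with hM
  have hc : (1 : ℂ) - u ≠ 0 := by
    have : (1 : ℝ) - u ≠ 0 := by linarith
    exact_mod_cast this
  have hQd : Q.det ≠ 0 := ((Matrix.isUnit_iff_isUnit_det Q).mp hQunit).ne_zero
  set N := Matrix.scalar (Fin n) ((1 : ℂ) - u)⁻¹ - M with hN
  have hQN : Q.map (Complex.ofReal ·) = ((1 : ℂ) - u) • Nᵀ := by
    ext i j
    by_cases hij : i = j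
    · subst hij; simp [hQ, hN, hM, mul_sub, hc]
    · simp [hQ, hN, hM, hij, Ne.symm hij, mul_sub]
  have hdet : (Q.map (Complex.ofReal ·)).det = (Q.det : ℂ) :=
    (RingHom.map_det Complex.ofRealHom Q).symm
  have hNd : N.det ≠ 0 := by
    intro h0
    rw [hQN, Matrix.det_smul, Matrix.det_transpose, h0, mul_zero] at hdet
    exact hQd (by exact_mod_cast hdet.symm)
  have hinv : Q⁻¹.map (Complex.ofReal ·) = ((1 : ℂ) - u)⁻¹ • (N⁻¹)ᵀ := by
    have a : Q⁻¹.map (Complex.ofReal ·) * Q.map (Complex.ofReal ·) = 1 := by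
      have := Matrix.nonsing_inv_mul Q (isUnit_iff_ne_zero.mpr hQd)
      have h3 := congrArg (Complex.ofRealHom.mapMatrix) this
      rw [map_mul, map_one] at h3
      exact h3
    have b : Q.map (Complex.ofReal ·) * (((1 : ℂ) - u)⁻¹ • (N⁻¹)ᵀ) = 1 := by
      rw [hQN, Matrix.smul_mul, Matrix.mul_smul, smul_smul, mul_inv_cancel₀ hc, one_smul,
        ← Matrix.transpose_mul, Matrix.nonsing_inv_mul _ (isUnit_iff_ne_zero.mpr hNd),
        Matrix.transpose_one]
    exact left_inv_eq_right_inv a b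
  have htr : ((Q⁻¹.trace : ℝ) : ℂ) = (Q⁻¹.map (Complex.ofReal ·)).trace := by
    simp [Matrix.trace]
  rw [htr, hinv, Matrix.trace_smul, Matrix.trace_transpose, trace_inv_aux M _ hNd, smul_eq_mul,
    ← Multiset.sum_map_mul_left]
  congr 1
  refine Multiset.map_congr rfl fun z _ => ?_
  rw [one_div, one_div, ← mul_inv, mul_sub, mul_inv_cancel₀ hc]
end
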